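/- arXiv:0801.0496 — 2 statements merged into one kernel-verified Lean document; each statement's English description precedes it below -/
import Mathlib

section
/- Let L > 0, a > 0, and let γ, θ ∈ ℝ satisfy one of: (i) 1/4 < γ < 3/4 and 3/8 − γ/2 ≤ θ < 3/4 − γ; (ii) 0 ≤ γ ≤ 1/4 and 5/8 − γ ≤ θ < 3/4 − γ; (iii) γ < 0 and 1/2 − γ ≤ θ < 3/4 − γ. Set λ_n = (2πn/L)² for n ≠ 0. Then there is a constant c (depending on L, γ, θ, a) such that for every complex sequence (v_n)_{n∈ℤ} with v_0 = 0 and ∑_{n≠0} λ_n^{2θ} |v_n|² < ∞, one has (∑_{n≠0} λ_n^{−2γ} | (π i n/L) ∑_{k∈ℤ} v_k v_{n−k} − a v_n |²)^{1/2} ≤ c (1 + ∑_{n≠0} λ_n^{2θ} |v_n|²). -/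
/-- Eigenvalue of `A = -d²/dξ²` on the `n`-th Fourier mode of a zero-mean
`L`-periodic function. -/
noncomputable def ksEigen (L : ℝ) (n : ℤ) : ℝ := (2 * Real.pi * n / L) ^ 2

/-- `n`-th Fourier coefficient of the Kuramoto–Sivashinsky nonlinearity
`B(v,v) = v v' = ½(v²)'`: `c_n = (π i n / L) ∑_k v_k v_{n-k}`. -/
noncomputable def ksB (L : ℝ) (v : ℤ → ℂ) (n : ℤ) : ℂ :=
  (Real.pi : ℂ) * Complex.I * (n : ℂ) / (L : ℂ) * ∑' k : ℤ, v k * v (n - k)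

/-!
On the Fourier side `A^{1/2}` multiplies the `n`-th mode by a constant times `|n|` and `B(v, v)` is
half the derivative of `v²`, so the claim is the product estimate `H^s × H^s → H^σ` with `s = 2θ`
and `σ = 1 - 2γ`. Split the convolution `∑_k v_k v_{n-k}` into `|k| ≤ |n - k|` and its mirror image.
With `v` normalised to `ℓ²`, Cauchy–Schwarz in `k` bounds each half by the square sum of the kernel
`|k + m|^σ |k|^{-s} |m|^{-s}` over `|k| ≤ |m|`, for `m` fixed. When `0 < s`, `σ ≤ s`,
`σ + 1/2 ≤ 2s` and `(σ, s) ≠ (1/2, 1/2)` this sum is bounded uniformly in `m`; at the excluded pair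
it grows like `log |m|`.
-/

open Finset
open scoped ENNReal NNReal

theorem rpow_add_mul_rpow_sub_one_le {q x : ℝ} (hq : 0 ≤ q) (hq1 : q ≤ 1) (hx : 0 ≤ x) :
    x ^ q + q * (x + 1) ^ (q - 1) ≤ (x + 1) ^ q := by
  have hx1 : 0 < x + 1 := by linarith
  have hbase : x / (x + 1) = 1 + -(1 / (x + 1)) := by field_simp; ring
  have hbern : (x / (x + 1)) ^ q ≤ 1 + q * -(1 / (x + 1)) := by
    rw [hbase]
    exact rpow_one_add_le_one_add_mul_self
      (neg_le_neg ((div_le_one hx1).2 (by linarith))) hq hq1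
  calc x ^ q + q * (x + 1) ^ (q - 1)
      = (x + 1) ^ q * (x / (x + 1)) ^ q + q * (x + 1) ^ (q - 1) := by
        rw [← Real.mul_rpow hx1.le (by positivity), mul_div_cancel₀ x hx1.ne']
    _ ≤ (x + 1) ^ q * (1 + q * -(1 / (x + 1))) + q * (x + 1) ^ (q - 1) := by gcongr
    _ = (x + 1) ^ q := by rw [Real.rpow_sub_one hx1.ne']; ring

/-- The Fourier symbol `|n| ^ p` of a fractional derivative on zero-mean periodic functions. The
zero mode gets weight `0` for every `p`, so that exponents add up without exception. -/
noncomputable def freqWeight (p : ℝ) (n : ℤ) : ℝ≥0 :=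
  if n = 0 then 0 else (n.natAbs : ℝ≥0) ^ p

namespace freqWeight

variable {p q : ℝ} {j k n : ℤ}

@[simp]
theorem zero_right (p : ℝ) : freqWeight p 0 = 0 := if_pos rfl

theorem of_ne_zero (p : ℝ) (hn : n ≠ 0) : freqWeight p n = (n.natAbs : ℝ≥0) ^ p := if_neg hn

theorem coe_of_ne_zero (p : ℝ) (hn : n ≠ 0) : (freqWeight p n : ℝ) = |(n : ℝ)| ^ p := by
  rw [of_ne_zero p hn, NNReal.coe_rpow, NNReal.coe_natCast, Nat.cast_natAbs, Int.cast_abs]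

theorem neg_right (p : ℝ) (n : ℤ) : freqWeight p (-n) = freqWeight p n := by
  simp only [freqWeight, neg_eq_zero, Int.natAbs_neg]

theorem natAbs_right (p : ℝ) (n : ℤ) : freqWeight p n.natAbs = freqWeight p n := by
  simp only [freqWeight, Int.natAbs_natCast, Nat.cast_eq_zero, Int.natAbs_eq_zero]

theorem add_exponent (p q : ℝ) (n : ℤ) :
    freqWeight (p + q) n = freqWeight p n * freqWeight q n := by
  rcases eq_or_ne n 0 with rfl | hn
  · simp
  · simp only [of_ne_zero _ hn]
    exact NNReal.rpow_add (by simpa using hn) p q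

theorem two_mul_exponent (p : ℝ) (n : ℤ) : freqWeight (2 * p) n = freqWeight p n ^ 2 := by
  rw [two_mul, add_exponent, sq]

theorem mul_neg_exponent (p : ℝ) (hn : n ≠ 0) : freqWeight p n * freqWeight (-p) n = 1 := by
  rw [← add_exponent, add_neg_cancel, of_ne_zero _ hn, NNReal.rpow_zero]

theorem mul_right (p : ℝ) (j k : ℤ) :
    freqWeight p (j * k) = freqWeight p j * freqWeight p k := by
  rcases eq_or_ne j 0 with rfl | hj
  · simp
  rcases eq_or_ne k 0 with rfl | hk
  · simp
  rw [of_ne_zero p (mul_ne_zero hj hk), of_ne_zero p hj, of_ne_zero p hk, Int.natAbs_mul,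
    Nat.cast_mul, NNReal.mul_rpow]

theorem le_of_exponent_le (hpq : p ≤ q) (n : ℤ) : freqWeight p n ≤ freqWeight q n := by
  rcases eq_or_ne n 0 with rfl | hn
  · simp
  · have : (1 : ℝ≥0) ≤ n.natAbs := by exact_mod_cast Int.natAbs_pos.2 hn
    simp only [of_ne_zero _ hn]
    gcongr

theorem le_of_natAbs_le (hp : 0 ≤ p) (h : j.natAbs ≤ k.natAbs) :
    freqWeight p j ≤ freqWeight p k := by
  rcases eq_or_ne j 0 with rfl | hj
  · simp
  · rw [of_ne_zero p hj, of_ne_zero p (by omega)]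
    gcongr

theorem le_of_natAbs_ge (hp : p ≤ 0) (hj : j ≠ 0) (h : j.natAbs ≤ k.natAbs) :
    freqWeight p k ≤ freqWeight p j := by
  rw [of_ne_zero p hj, of_ne_zero p (by omega), ← NNReal.coe_le_coe]
  push_cast
  exact Real.rpow_le_rpow_of_nonpos (by positivity) (by exact_mod_cast h) hp

theorem shift_le (hp : 0 ≤ p) {m : ℤ} (hk : k ∈ Icc (-m.natAbs : ℤ) m.natAbs) :
    freqWeight p (k + m) ≤ freqWeight p 2 * freqWeight p m := by
  rw [← mul_right]
  rw [mem_Icc] at hk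
  exact le_of_natAbs_le hp (by omega)

theorem sum_shift_mul_le (hp : 0 ≤ p) (q : ℝ) (m : ℤ) :
    ∑ k ∈ Icc (-m.natAbs : ℤ) m.natAbs, freqWeight p (k + m) * freqWeight q k ≤
      freqWeight p 2 * freqWeight p m * ∑ k ∈ Icc (-m.natAbs : ℤ) m.natAbs, freqWeight q k := by
  rw [mul_sum]
  exact sum_le_sum fun k hk => mul_le_mul_left (shift_le hp hk) _

theorem mul_le_add_of_nonpos (hp : p ≤ 0) (hq : q ≤ 0) (j k : ℤ) :
    freqWeight p j * freqWeight q k ≤ freqWeight (p + q) j + freqWeight (p + q) k := by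
  rcases eq_or_ne j 0 with rfl | hj
  · simp
  rcases eq_or_ne k 0 with rfl | hk
  · simp
  rcases le_total j.natAbs k.natAbs with h | h
  · calc freqWeight p j * freqWeight q k ≤ freqWeight p j * freqWeight q j := by
          gcongr; exact le_of_natAbs_ge hq hj h
      _ ≤ _ := by rw [← add_exponent]; exact le_self_add
  · calc freqWeight p j * freqWeight q k ≤ freqWeight p k * freqWeight q k := by
          gcongr; exact le_of_natAbs_ge hp hk h
      _ ≤ _ := by rw [← add_exponent]; exact le_add_self

theorem summable_of_lt_neg_one (hp : p < -1) : Summable (freqWeight p) := by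
  have hsum : Summable fun n : ℤ => |(n : ℝ)| ^ p := by
    simpa using Real.summable_abs_int_rpow (b := -p) (by linarith)
  refine NNReal.summable_coe.1 (hsum.congr fun n => ?_)
  rcases eq_or_ne n 0 with rfl | hn
  · simp [Real.zero_rpow (by linarith : p ≠ 0)]
  · rw [coe_of_ne_zero p hn]

theorem sum_range_le (hp : -1 < p) (hp0 : p ≤ 0) (N : ℕ) :
    ∑ j ∈ range (N + 1), (freqWeight p j : ℝ) ≤ (N : ℝ) ^ (p + 1) / (p + 1) := by
  have hq : 0 < p + 1 := by linarith
  induction N with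
  | zero => simp [hq.ne']
  | succ N ih =>
    have hconcave := rpow_add_mul_rpow_sub_one_le hq.le (by linarith) N.cast_nonneg
    rw [add_sub_cancel_right] at hconcave
    rw [sum_range_succ, coe_of_ne_zero _ (by omega), Int.cast_natCast, Nat.abs_cast,
      Nat.cast_add_one]
    calc _ ≤ (N : ℝ) ^ (p + 1) / (p + 1) + ((N : ℝ) + 1) ^ p := by gcongr
      _ = ((N : ℝ) ^ (p + 1) + (p + 1) * ((N : ℝ) + 1) ^ p) / (p + 1) := by field_simp
      _ ≤ _ := by gcongr

theorem exists_sum_Icc_le (hp : -1 < p) (hp0 : p ≤ 0) :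
    ∃ C : ℝ≥0, ∀ N : ℕ,
      ∑ k ∈ Icc (-N : ℤ) N, freqWeight p k ≤ C * freqWeight (p + 1) N := by
  have hq : 0 < p + 1 := by linarith
  refine ⟨Real.toNNReal (2 / (p + 1)), fun N => ?_⟩
  rcases N.eq_zero_or_pos with rfl | hN
  · simp
  have hhalf := sum_range_le hp hp0 N
  have heven : Function.Even fun k : ℤ => (freqWeight p k : ℝ) := fun k =>
    congrArg _ (neg_right p k)
  rw [← NNReal.coe_le_coe, NNReal.coe_sum, sum_Icc_of_even_eq_range heven, NNReal.coe_mul,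
    zero_right, NNReal.coe_zero, sub_zero, two_nsmul, coe_of_ne_zero _ (by omega), Int.cast_natCast,
    Nat.abs_cast, Real.coe_toNNReal _ (by positivity)]
  linarith [show 2 / (p + 1) * (N : ℝ) ^ (p + 1) = 2 * ((N : ℝ) ^ (p + 1) / (p + 1)) by ring]

theorem exists_sum_Icc_shift_le (hp : -1 < p) (hp0 : p ≤ 0) :
    ∃ C : ℝ≥0, ∀ m : ℤ,
      ∑ k ∈ Icc (-m.natAbs : ℤ) m.natAbs, freqWeight p (k + m) ≤ C * freqWeight (p + 1) m := by
  obtain ⟨C, hC⟩ := exists_sum_Icc_le hp hp0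
  refine ⟨C * freqWeight (p + 1) 2, fun m => ?_⟩
  calc ∑ k ∈ Icc (-m.natAbs : ℤ) m.natAbs, freqWeight p (k + m)
      = ∑ k ∈ (Icc (-m.natAbs : ℤ) m.natAbs).map (addRightEmbedding m), freqWeight p k := by
        simp only [sum_map, addRightEmbedding_apply]
    _ ≤ ∑ k ∈ Icc (-(2 * m.natAbs : ℕ) : ℤ) (2 * m.natAbs : ℕ), freqWeight p k := by
        refine sum_le_sum_of_subset fun j hj => ?_
        rw [map_add_right_Icc, mem_Icc] at hj
        rw [mem_Icc]
        omega
    _ ≤ C * freqWeight (p + 1) (2 * m.natAbs : ℕ) := hC _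
    _ = C * freqWeight (p + 1) 2 * freqWeight (p + 1) m := by
        rw [Nat.cast_mul, Nat.cast_two, mul_right, natAbs_right, mul_assoc]

end freqWeight

/-- Boundedness of the low-high interaction sums `∑_{|k| ≤ |m|} |k + m|^α |k|^{-β} |m|^{-β}`,
uniformly in the high frequency `m`. It makes the product of two sequences in `ℓ²(|n|^β)` lie in
`ℓ²(|n|^α)` on the Fourier side. -/
def LowHighBounded (α β : ℝ) : Prop :=
  ∃ C : ℝ≥0, ∀ m : ℤ, ∑ k ∈ Icc (-m.natAbs : ℤ) m.natAbs,
    freqWeight α (k + m) * (freqWeight (-β) k * freqWeight (-β) m) ≤ C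

namespace LowHighBounded

variable {α α' β β' : ℝ}

theorem mono (h : LowHighBounded α' β') (hα : α ≤ α') (hβ : β' ≤ β) : LowHighBounded α β := by
  obtain ⟨C, hC⟩ := h
  refine ⟨C, fun m => (sum_le_sum fun k _ => ?_).trans (hC m)⟩
  have hneg : -β ≤ -β' := neg_le_neg hβ
  gcongr <;> exact freqWeight.le_of_exponent_le ‹_› _

theorem of_exists_sum_le (h : ∃ C : ℝ≥0, ∀ m : ℤ, ∑ k ∈ Icc (-m.natAbs : ℤ) m.natAbs,
    freqWeight α (k + m) * freqWeight (-β) k ≤ C * freqWeight β m) : LowHighBounded α β := by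
  obtain ⟨C, hC⟩ := h
  refine ⟨C, fun m => ?_⟩
  rcases eq_or_ne m 0 with rfl | hm
  · simp
  simp_rw [← mul_assoc]
  rw [← sum_mul]
  calc _ ≤ C * freqWeight β m * freqWeight (-β) m := by gcongr; exact hC m
    _ = C := by rw [mul_assoc, freqWeight.mul_neg_exponent β hm, mul_one]

theorem self_of_one_lt (hβ : 1 < β) : LowHighBounded β β := by
  refine of_exists_sum_le ⟨freqWeight β 2 * ∑' k, freqWeight (-β) k, fun m => ?_⟩
  refine (freqWeight.sum_shift_mul_le (by linarith) _ m).trans ?_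
  rw [mul_right_comm]
  gcongr
  exact (freqWeight.summable_of_lt_neg_one (by linarith)).sum_le_tsum _ fun _ _ => zero_le

theorem critical_of_half_le (hβ : 1 / 2 ≤ β) (hβ1 : β < 1) : LowHighBounded (2 * β - 1) β := by
  obtain ⟨C, hC⟩ := freqWeight.exists_sum_Icc_le (p := -β) (by linarith) (by linarith)
  refine of_exists_sum_le ⟨freqWeight (2 * β - 1) 2 * C, fun m => ?_⟩
  calc _ ≤ freqWeight (2 * β - 1) 2 * freqWeight (2 * β - 1) m *
        ∑ k ∈ Icc (-m.natAbs : ℤ) m.natAbs, freqWeight (-β) k :=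
          freqWeight.sum_shift_mul_le (by linarith) _ m
    _ ≤ freqWeight (2 * β - 1) 2 * freqWeight (2 * β - 1) m * (C * freqWeight (-β + 1) m) := by
        gcongr
        simpa only [freqWeight.natAbs_right] using hC m.natAbs
    _ = freqWeight (2 * β - 1) 2 * C * (freqWeight (2 * β - 1) m * freqWeight (-β + 1) m) := by ring
    _ = _ := by rw [← freqWeight.add_exponent]; ring_nf

theorem critical_of_le_half (hβ : 0 < β) (hβ2 : β ≤ 1 / 2) : LowHighBounded (2 * β - 1) β := by
  obtain ⟨C, hC⟩ := freqWeight.exists_sum_Icc_le (p := β - 1) (by linarith) (by linarith)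
  obtain ⟨D, hD⟩ := freqWeight.exists_sum_Icc_shift_le (p := β - 1) (by linarith) (by linarith)
  simp only [sub_add_cancel] at hC hD
  refine of_exists_sum_le ⟨D + C, fun m => ?_⟩
  calc _ ≤ ∑ k ∈ Icc (-m.natAbs : ℤ) m.natAbs,
        (freqWeight (β - 1) (k + m) + freqWeight (β - 1) k) := by
        refine sum_le_sum fun k _ => ?_
        have h := freqWeight.mul_le_add_of_nonpos (p := 2 * β - 1) (q := -β) (by linarith)
          (by linarith) (k + m) k
        rwa [show 2 * β - 1 + -β = β - 1 by ring] at h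
    _ ≤ D * freqWeight β m + C * freqWeight β m := by
        rw [sum_add_distrib]
        gcongr
        · exact hD m
        · simpa only [freqWeight.natAbs_right] using hC m.natAbs
    _ = _ := (add_mul _ _ _).symm

theorem critical_of_lt_one (hβ : 0 < β) (hβ1 : β < 1) : LowHighBounded (2 * β - 1) β :=
  (le_total (1 / 2) β).elim (critical_of_half_le · hβ1) (critical_of_le_half hβ)

theorem of_le (hβ : 0 < β) (hαβ : α ≤ β) (hα : α + 1 ≤ 2 * β) (hne : ¬(α = 1 ∧ β = 1)) :
    LowHighBounded α β := by
  rcases lt_trichotomy β 1 with hβ1 | rfl | hβ1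
  · exact (critical_of_lt_one hβ hβ1).mono (by linarith) le_rfl
  · have hα1 : α < 1 := lt_of_le_of_ne hαβ fun h => hne ⟨h, rfl⟩
    obtain ⟨β', hlow, hβ'⟩ := exists_between (max_lt (show (α + 1) / 2 < 1 by linarith) one_pos)
    rw [max_lt_iff] at hlow
    exact (critical_of_lt_one hlow.2 hβ').mono (by linarith) hβ'.le
  · exact (self_of_one_lt hβ1).mono hαβ le_rfl

end LowHighBounded

theorem ennreal_tsum_mul_sq_le {ι : Type*} (f g : ι → ℝ≥0∞) :
    (∑' i, f i * g i) ^ 2 ≤ (∑' i, f i ^ 2) * ∑' i, g i ^ 2 := by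
  let _ : MeasurableSpace ι := ⊤
  have hHolder := ENNReal.lintegral_mul_le_Lp_mul_Lq (MeasureTheory.Measure.count (α := ι))
    Real.HolderConjugate.two_two (f := f) (g := g)
    measurable_from_top.aemeasurable measurable_from_top.aemeasurable
  simp only [MeasureTheory.lintegral_count, Pi.mul_apply, ENNReal.rpow_two] at hHolder
  calc (∑' i, f i * g i) ^ 2
      ≤ ((∑' i, f i ^ 2) ^ (1 / 2 : ℝ) * (∑' i, g i ^ 2) ^ (1 / 2 : ℝ)) ^ 2 := by gcongr
    _ = (∑' i, f i ^ 2) * ∑' i, g i ^ 2 := by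
      rw [mul_pow, ← ENNReal.rpow_two, ← ENNReal.rpow_two, ← ENNReal.rpow_mul, ← ENNReal.rpow_mul]
      norm_num

theorem ennreal_add_sq_le (a b : ℝ≥0∞) : (a + b) ^ 2 ≤ 2 * (a ^ 2 + b ^ 2) := by
  have h := ENNReal.rpow_add_le_mul_rpow_add_rpow a b one_le_two
  norm_num [ENNReal.rpow_two] at h
  exact h

theorem tsum_kernel_conv_sq_le {G : Type*} [AddGroup G] {K : G → G → ℝ≥0∞} {C : ℝ≥0∞}
    (hK : ∀ m, ∑' k, K k m ^ 2 ≤ C) (f g : G → ℝ≥0∞) :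
    ∑' n, (∑' k, f k * (K k (n - k) * g (n - k))) ^ 2 ≤
      C * ((∑' k, f k ^ 2) * ∑' m, g m ^ 2) := by
  calc ∑' n, (∑' k, f k * (K k (n - k) * g (n - k))) ^ 2
      ≤ ∑' n, (∑' k, f k ^ 2) * ∑' k, (K k (n - k) * g (n - k)) ^ 2 :=
        ENNReal.tsum_le_tsum fun _ => ennreal_tsum_mul_sq_le _ _
    _ = (∑' k, f k ^ 2) * ∑' k, ∑' n, (K k (n - k) * g (n - k)) ^ 2 := by
        rw [ENNReal.tsum_mul_left, ENNReal.tsum_comm]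
    _ = (∑' k, f k ^ 2) * ∑' m, (∑' k, K k m ^ 2) * g m ^ 2 := by
        have hshift (k : G) : ∑' n, (K k (n - k) * g (n - k)) ^ 2 = ∑' m, (K k m * g m) ^ 2 :=
          (Equiv.subRight k).tsum_eq fun m => (K k m * g m) ^ 2
        simp_rw [hshift]
        rw [ENNReal.tsum_comm]
        simp_rw [mul_pow, ENNReal.tsum_mul_right]
    _ ≤ (∑' k, f k ^ 2) * ∑' m, C * g m ^ 2 := by gcongr with m; exact hK m
    _ = C * ((∑' k, f k ^ 2) * ∑' m, g m ^ 2) := by rw [ENNReal.tsum_mul_left, mul_left_comm]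

/-- The squared homogeneous Sobolev norm `∑ |n|^{2s} ‖v_n‖²` of a sequence of Fourier
coefficients; for a zero-mean `2π`-periodic function it is `|A^{s/2} v|²`. -/
noncomputable def sobolevEnergy {E : Type*} [SeminormedAddCommGroup E] (s : ℝ) (v : ℤ → E) :
    ℝ≥0∞ :=
  ∑' n, (freqWeight s n * ‖v n‖ₑ) ^ 2

namespace sobolevEnergy

variable {E : Type*} [SeminormedAddCommGroup E]

theorem mono_exponent {s t : ℝ} (hst : s ≤ t) (v : ℤ → E) :
    sobolevEnergy s v ≤ sobolevEnergy t v := by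
  refine ENNReal.tsum_le_tsum fun n => ?_
  gcongr
  exact freqWeight.le_of_exponent_le hst n

theorem sub_le (s : ℝ) (u v : ℤ → E) :
    sobolevEnergy s (fun n => u n - v n) ≤ 2 * (sobolevEnergy s u + sobolevEnergy s v) := by
  simp only [sobolevEnergy]
  rw [← ENNReal.tsum_add, ← ENNReal.tsum_mul_left]
  refine ENNReal.tsum_le_tsum fun n => le_trans ?_ (ennreal_add_sq_le _ _)
  rw [← mul_add]
  gcongr
  exact enorm_sub_le

theorem const_mul {𝕜 : Type*} [NormedDivisionRing 𝕜] (s : ℝ) (a : 𝕜) (v : ℤ → 𝕜) :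
    sobolevEnergy s (fun n => a * v n) = ‖a‖ₑ ^ 2 * sobolevEnergy s v := by
  simp only [sobolevEnergy]
  rw [← ENNReal.tsum_mul_left]
  refine tsum_congr fun n => ?_
  rw [enorm_mul]
  ring

end sobolevEnergy

/-- Fourier coefficients of the product of two periodic functions with coefficients `u`, `v`;
wherever the series diverges the value is `0`. -/
noncomputable def fourierConv {R : Type*} [NonUnitalNormedRing R] (u v : ℤ → R) (n : ℤ) : R :=
  ∑' k, u k * v (n - k)

/-- The kernel of the low-high half of the product in `ℓ²` coordinates: `k` is the low
frequency, `m` the high one, and `n = k + m` the output. -/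
noncomputable def lowHighKernel (s σ : ℝ) (k m : ℤ) : ℝ≥0 :=
  if k.natAbs ≤ m.natAbs then freqWeight σ (k + m) * (freqWeight (-s) k * freqWeight (-s) m) else 0

theorem LowHighBounded.exists_tsum_lowHighKernel_sq_le {s σ : ℝ}
    (h : LowHighBounded (2 * σ) (2 * s)) :
    ∃ C : ℝ≥0, ∀ m : ℤ, ∑' k, (lowHighKernel s σ k m : ℝ≥0∞) ^ 2 ≤ C := by
  obtain ⟨C, hC⟩ := h
  refine ⟨C, fun m => ?_⟩
  rw [tsum_eq_sum (s := Icc (-m.natAbs : ℤ) m.natAbs)]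
  · refine le_of_eq_of_le ?_ (ENNReal.coe_le_coe.2 (hC m))
    rw [ENNReal.ofNNReal_finsetSum]
    refine sum_congr rfl fun k hk => ?_
    rw [mem_Icc] at hk
    rw [lowHighKernel, if_pos (by omega)]
    simp only [← mul_neg, freqWeight.two_mul_exponent]
    push_cast
    ring
  · intro k hk
    rw [mem_Icc] at hk
    rw [lowHighKernel, if_neg (by omega), ENNReal.coe_zero, zero_pow two_ne_zero]

theorem freqWeight_le_lowHighKernel_add_swap (s σ : ℝ) {k m : ℤ} (hk : k ≠ 0) (hm : m ≠ 0) :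
    freqWeight σ (k + m) ≤
      (lowHighKernel s σ k m + lowHighKernel s σ m k) * (freqWeight s k * freqWeight s m) := by
  have hcancel : freqWeight σ (k + m) = freqWeight σ (k + m) *
      (freqWeight (-s) k * freqWeight (-s) m) * (freqWeight s k * freqWeight s m) := by
    have hk' := freqWeight.mul_neg_exponent s hk
    have hm' := freqWeight.mul_neg_exponent s hm
    calc _ = freqWeight σ (k + m) * (freqWeight s k * freqWeight (-s) k) *
          (freqWeight s m * freqWeight (-s) m) := by rw [hk', hm', mul_one, mul_one]
      _ = _ := by ring
  rw [hcancel]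
  gcongr
  rcases le_total k.natAbs m.natAbs with h | h
  · rw [lowHighKernel, if_pos h]
    exact le_self_add
  · rw [lowHighKernel, lowHighKernel, if_pos h, add_comm m k, mul_comm (freqWeight (-s) m)]
    exact le_add_self

section fourierConv

variable {R : Type*} [NonUnitalNormedRing R]

/-- The low-high half of the product in `ℓ²` coordinates, where `u` carries the low frequency. -/
noncomputable def paraproduct (s σ : ℝ) (u v : ℤ → R) (n : ℤ) : ℝ≥0∞ :=
  ∑' k, freqWeight s k * ‖u k‖ₑ *
    (lowHighKernel s σ k (n - k) * (freqWeight s (n - k) * ‖v (n - k)‖ₑ))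

theorem freqWeight_mul_enorm_mul_le (s σ : ℝ) {u v : ℤ → R} (hu : u 0 = 0) (hv : v 0 = 0)
    (k m : ℤ) :
    freqWeight σ (k + m) * ‖u k * v m‖ₑ ≤
      freqWeight s k * ‖u k‖ₑ * (lowHighKernel s σ k m * (freqWeight s m * ‖v m‖ₑ)) +
      freqWeight s m * ‖v m‖ₑ * (lowHighKernel s σ m k * (freqWeight s k * ‖u k‖ₑ)) := by
  rcases eq_or_ne k 0 with rfl | hk
  · simp [hu]
  rcases eq_or_ne m 0 with rfl | hm
  · simp [hv]
  have hmul : ‖u k * v m‖ₑ ≤ ‖u k‖ₑ * ‖v m‖ₑ := by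
    simp only [enorm_eq_nnnorm]
    exact_mod_cast nnnorm_mul_le (u k) (v m)
  have hweight := ENNReal.coe_le_coe.2 (freqWeight_le_lowHighKernel_add_swap s σ hk hm)
  push_cast at hweight
  calc _ ≤ (lowHighKernel s σ k m + lowHighKernel s σ m k : ℝ≥0∞) *
        (freqWeight s k * freqWeight s m) * (‖u k‖ₑ * ‖v m‖ₑ) := by gcongr
    _ = _ := by ring

theorem freqWeight_mul_enorm_fourierConv_le (s σ : ℝ) {u v : ℤ → R} (hu : u 0 = 0) (hv : v 0 = 0)
    (n : ℤ) :
    freqWeight σ n * ‖fourierConv u v n‖ₑ ≤ paraproduct s σ u v n + paraproduct s σ v u n := by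
  have hswap : paraproduct s σ v u n = ∑' k, freqWeight s (n - k) * ‖v (n - k)‖ₑ *
      (lowHighKernel s σ (n - k) k * (freqWeight s k * ‖u k‖ₑ)) := by
    rw [paraproduct, ← (Equiv.subLeft n).tsum_eq]
    simp only [Equiv.subLeft_apply, sub_sub_cancel]
  calc _ ≤ (freqWeight σ n : ℝ≥0∞) * ∑' k, ‖u k * v (n - k)‖ₑ := by
        gcongr
        exact enorm_tsum_le_tsum_enorm
    _ = ∑' k, (freqWeight σ (k + (n - k)) : ℝ≥0∞) * ‖u k * v (n - k)‖ₑ := by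
        simp only [add_sub_cancel, ENNReal.tsum_mul_left]
    _ ≤ _ := by
        rw [hswap, paraproduct, ← ENNReal.tsum_add]
        exact ENNReal.tsum_le_tsum fun k => freqWeight_mul_enorm_mul_le s σ hu hv k (n - k)

theorem exists_sobolevEnergy_fourierConv_le {s σ : ℝ} (hs : 0 < s) (hσs : σ ≤ s)
    (hσ : σ + 1 / 2 ≤ 2 * s) (hne : ¬(σ = 1 / 2 ∧ s = 1 / 2)) :
    ∃ C : ℝ≥0, ∀ u v : ℤ → R, u 0 = 0 → v 0 = 0 →
      sobolevEnergy σ (fourierConv u v) ≤ C * (sobolevEnergy s u * sobolevEnergy s v) := by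
  have hbdd : LowHighBounded (2 * σ) (2 * s) :=
    .of_le (by linarith) (by linarith) (by linarith)
      fun h => hne ⟨by linarith [h.1], by linarith [h.2]⟩
  obtain ⟨C, hC⟩ := hbdd.exists_tsum_lowHighKernel_sq_le
  have hpara (u v : ℤ → R) :
      ∑' n, paraproduct s σ u v n ^ 2 ≤ C * (sobolevEnergy s u * sobolevEnergy s v) :=
    tsum_kernel_conv_sq_le hC _ _
  refine ⟨4 * C, fun u v hu hv => ?_⟩
  calc sobolevEnergy σ (fourierConv u v)
      ≤ ∑' n, 2 * (paraproduct s σ u v n ^ 2 + paraproduct s σ v u n ^ 2) :=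
        ENNReal.tsum_le_tsum fun n =>
          (pow_le_pow_left' (freqWeight_mul_enorm_fourierConv_le s σ hu hv n) 2).trans
            (ennreal_add_sq_le _ _)
    _ = 2 * (∑' n, paraproduct s σ u v n ^ 2 + ∑' n, paraproduct s σ v u n ^ 2) := by
        rw [ENNReal.tsum_mul_left, ENNReal.tsum_add]
    _ ≤ 2 * (C * (sobolevEnergy s u * sobolevEnergy s v) +
          C * (sobolevEnergy s v * sobolevEnergy s u)) := by
        gcongr <;> exact hpara _ _
    _ = (4 * C : ℝ≥0) * (sobolevEnergy s u * sobolevEnergy s v) := by push_cast; ring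

end fourierConv

theorem summable_and_sqrt_tsum_le {ι : Type*} {f : ι → ℝ} {M : ℝ} (hf : ∀ i, 0 ≤ f i)
    (hM : 0 ≤ M) (h : ∑' i, ENNReal.ofReal (f i) ≤ ENNReal.ofReal (M ^ 2)) :
    Summable f ∧ √(∑' i, f i) ≤ M := by
  have hsum : Summable f := by
    simpa only [ENNReal.toReal_ofReal (hf _)] using
      ENNReal.summable_toReal (h.trans_lt ENNReal.ofReal_lt_top).ne
  rw [← ENNReal.ofReal_tsum_of_nonneg hf hsum, ENNReal.ofReal_le_ofReal_iff (sq_nonneg M)] at h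
  exact ⟨hsum, Real.sqrt_le_iff.2 ⟨hM, h⟩⟩

theorem ksEigen_rpow_mul_nonneg (L p : ℝ) (v : ℤ → ℂ) (n : ℤ) :
    0 ≤ ksEigen L n ^ p * ‖v n‖ ^ 2 :=
  mul_nonneg (Real.rpow_nonneg (sq_nonneg _) p) (sq_nonneg _)

theorem ksB_eq_mul_fourierConv (L : ℝ) (v : ℤ → ℂ) (n : ℤ) :
    ksB L v n = Real.pi * Complex.I * n / L * fourierConv v v n := rfl

theorem ksB_zero (L : ℝ) (v : ℤ → ℂ) : ksB L v 0 = 0 := by simp [ksB]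

theorem ofReal_ksEigen_rpow_mul (L p : ℝ) {v : ℤ → ℂ} (hv : v 0 = 0) (n : ℤ) :
    ENNReal.ofReal (ksEigen L n ^ p * ‖v n‖ ^ 2) =
      ENNReal.ofReal (((2 * Real.pi / L) ^ 2) ^ p) * (freqWeight p n * ‖v n‖ₑ) ^ 2 := by
  rcases eq_or_ne n 0 with rfl | hn
  · simp [hv]
  have hweight : (freqWeight p n : ℝ) ^ 2 = ((n : ℝ) ^ 2) ^ p := by
    rw [freqWeight.coe_of_ne_zero p hn, ← Real.rpow_mul_natCast (abs_nonneg _), mul_comm,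
      Real.rpow_natCast_mul (abs_nonneg _), sq_abs]
  have heigen : ksEigen L n ^ p = ((2 * Real.pi / L) ^ 2) ^ p * (freqWeight p n : ℝ) ^ 2 := by
    rw [hweight, ← Real.mul_rpow (sq_nonneg _) (sq_nonneg _), ← mul_pow, ksEigen,
      mul_div_right_comm]
  rw [heigen, mul_assoc, ← mul_pow, ENNReal.ofReal_mul (by positivity),
    ENNReal.ofReal_pow (by positivity), ENNReal.ofReal_mul (by positivity),
    ENNReal.ofReal_coe_nnreal, ofReal_norm]

theorem tsum_ofReal_ksEigen_rpow_mul (L p : ℝ) {v : ℤ → ℂ} (hv : v 0 = 0) :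
    ∑' n, ENNReal.ofReal (ksEigen L n ^ p * ‖v n‖ ^ 2) =
      ENNReal.ofReal (((2 * Real.pi / L) ^ 2) ^ p) * sobolevEnergy p v := by
  simp_rw [ofReal_ksEigen_rpow_mul L p hv]
  exact ENNReal.tsum_mul_left

theorem sobolevEnergy_eq_ofReal {L : ℝ} (hL : L ≠ 0) {p : ℝ} {v : ℤ → ℂ} (hv : v 0 = 0)
    (hsum : Summable fun n => ksEigen L n ^ p * ‖v n‖ ^ 2) :
    sobolevEnergy p v = ENNReal.ofReal
      ((((2 * Real.pi / L) ^ 2) ^ p)⁻¹ * ∑' n, ksEigen L n ^ p * ‖v n‖ ^ 2) := by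
  have hscale : 0 < ((2 * Real.pi / L) ^ 2) ^ p := by positivity
  rw [ENNReal.ofReal_mul (by positivity),
    ENNReal.ofReal_tsum_of_nonneg (ksEigen_rpow_mul_nonneg L p v) hsum,
    tsum_ofReal_ksEigen_rpow_mul L p hv, ← mul_assoc, ← ENNReal.ofReal_mul (by positivity),
    inv_mul_cancel₀ hscale.ne', ENNReal.ofReal_one, one_mul]

theorem sobolevEnergy_ksB (L t : ℝ) (v : ℤ → ℂ) :
    sobolevEnergy t (ksB L v) =
      ‖Real.pi / L‖ₑ ^ 2 * sobolevEnergy (t + 1) (fourierConv v v) := by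
  have hsymbol (n : ℤ) :
      ‖(Real.pi * Complex.I * n / L : ℂ)‖ₑ = ‖Real.pi / L‖ₑ * freqWeight 1 n := by
    have hw : freqWeight 1 n = ‖(n : ℝ)‖₊ := by
      rcases eq_or_ne n 0 with rfl | hn
      · simp
      · exact NNReal.eq (by simp [freqWeight.coe_of_ne_zero 1 hn])
    rw [hw, ← enorm_eq_nnnorm, ← enorm_mul, ← ofReal_norm, ← ofReal_norm]
    congr 1
    simp only [norm_mul, norm_div, Complex.norm_real, Complex.norm_I, Complex.norm_intCast,
      Real.norm_eq_abs, mul_one]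
    ring
  simp only [sobolevEnergy]
  rw [← ENNReal.tsum_mul_left]
  refine tsum_congr fun n => ?_
  rw [ksB_eq_mul_fourierConv, enorm_mul, hsymbol, freqWeight.add_exponent]
  push_cast
  ring

theorem exists_sobolevEnergy_ksB_sub_le (L : ℝ) (a : ℂ) {s t : ℝ} (hs : 0 < s) (hts : t + 1 ≤ s)
    (ht : t + 3 / 2 ≤ 2 * s) (hne : ¬(t = -1 / 2 ∧ s = 1 / 2)) :
    ∃ C : ℝ≥0, ∀ v : ℤ → ℂ, v 0 = 0 →
      sobolevEnergy t (fun n => ksB L v n - a * v n) ≤ C * (1 + sobolevEnergy s v) ^ 2 := by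
  obtain ⟨C, hC⟩ := exists_sobolevEnergy_fourierConv_le (R := ℂ) hs hts (by linarith)
    fun h => hne ⟨by linarith [h.1], h.2⟩
  refine ⟨2 * (‖Real.pi / L‖₊ ^ 2 * C + ‖a‖₊ ^ 2), fun v hv => ?_⟩
  set S := sobolevEnergy s v
  have hB : sobolevEnergy t (ksB L v) ≤ ‖Real.pi / L‖ₑ ^ 2 * (C * S ^ 2) := by
    rw [sobolevEnergy_ksB, sq S]
    gcongr
    exact hC v v hv hv
  have hlin : sobolevEnergy t (fun n => a * v n) ≤ ‖a‖ₑ ^ 2 * S := by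
    rw [sobolevEnergy.const_mul]
    gcongr
    exact sobolevEnergy.mono_exponent (by linarith) v
  have hSq : S ≤ (1 + S) ^ 2 := le_add_self.trans (le_self_pow le_self_add two_ne_zero)
  calc sobolevEnergy t (fun n => ksB L v n - a * v n)
      ≤ 2 * (sobolevEnergy t (ksB L v) + sobolevEnergy t fun n => a * v n) :=
        sobolevEnergy.sub_le _ _ _
    _ ≤ 2 * (‖Real.pi / L‖ₑ ^ 2 * (C * (1 + S) ^ 2) + ‖a‖ₑ ^ 2 * (1 + S) ^ 2) := by
        gcongr 2 * (?_ + ?_)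
        · exact hB.trans (by gcongr; exact le_add_self)
        · exact hlin.trans (by gcongr)
    _ = _ := by simp only [enorm_eq_nnnorm]; push_cast; ring

theorem ks_nonlinearity_growth_general (L : ℝ) (hL : L ≠ 0) (a : ℂ) (γ θ : ℝ) (hθ : 0 < θ)
    (hγθ : 1 / 2 - γ ≤ θ) (hγθ' : 3 / 8 - γ / 2 ≤ θ) (hne : ¬(γ = 1 / 4 ∧ θ = 1 / 4)) :
    ∃ c : ℝ, ∀ v : ℤ → ℂ, v 0 = 0 →
      Summable (fun n : ℤ => ksEigen L n ^ (2 * θ) * ‖v n‖ ^ 2) →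
      Summable (fun n : ℤ => ksEigen L n ^ (-(2 * γ)) * ‖ksB L v n - a * v n‖ ^ 2) ∧
      √(∑' n : ℤ, ksEigen L n ^ (-(2 * γ)) * ‖ksB L v n - a * v n‖ ^ 2) ≤
        c * (1 + ∑' n : ℤ, ksEigen L n ^ (2 * θ) * ‖v n‖ ^ 2) := by
  obtain ⟨C, hC⟩ := exists_sobolevEnergy_ksB_sub_le L a (s := 2 * θ) (t := -(2 * γ))
    (by linarith) (by linarith) (by linarith)
    fun h => hne ⟨by linarith [h.1], by linarith [h.2]⟩
  set D := ((2 * Real.pi / L) ^ 2) ^ (2 * θ)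
  set E := ((2 * Real.pi / L) ^ 2) ^ (-(2 * γ))
  have hD : 0 ≤ D := by positivity
  have hE : 0 ≤ E := by positivity
  refine ⟨√(E * C) * (1 + D⁻¹), fun v hv hsum => ?_⟩
  set T := ∑' n : ℤ, ksEigen L n ^ (2 * θ) * ‖v n‖ ^ 2
  have hT : 0 ≤ T := tsum_nonneg (ksEigen_rpow_mul_nonneg L _ v)
  have hT_scale : 1 + D⁻¹ * T ≤ (1 + D⁻¹) * (1 + T) := by nlinarith [inv_nonneg.2 hD]
  refine summable_and_sqrt_tsum_le (ksEigen_rpow_mul_nonneg L _ fun n => ksB L v n - a * v n)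
    (by positivity) ?_
  calc ∑' n, ENNReal.ofReal (ksEigen L n ^ (-(2 * γ)) * ‖ksB L v n - a * v n‖ ^ 2)
      = ENNReal.ofReal E * sobolevEnergy (-(2 * γ)) (fun n => ksB L v n - a * v n) :=
        tsum_ofReal_ksEigen_rpow_mul L _ (by simp [ksB_zero, hv])
    _ ≤ ENNReal.ofReal E * (C * (1 + sobolevEnergy (2 * θ) v) ^ 2) := by gcongr; exact hC v hv
    _ = ENNReal.ofReal (E * (C * (1 + D⁻¹ * T) ^ 2)) := by
        rw [sobolevEnergy_eq_ofReal hL hv hsum, ENNReal.ofReal_mul hE,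
          ENNReal.ofReal_mul C.coe_nonneg, ENNReal.ofReal_coe_nnreal,
          ENNReal.ofReal_pow (by positivity), ENNReal.ofReal_add one_pos.le (by positivity),
          ENNReal.ofReal_one]
    _ ≤ ENNReal.ofReal (E * (C * ((1 + D⁻¹) * (1 + T)) ^ 2)) := by gcongr
    _ = ENNReal.ofReal ((√(E * C) * (1 + D⁻¹) * (1 + T)) ^ 2) := by
        rw [mul_assoc √_, mul_pow √_, Real.sq_sqrt (by positivity), mul_assoc]

/-- The paper's Lemma in Fourier form: `|A^{-γ}[B(v,v) - a v]| ≤ c (1 + |A^θ v|²)`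
for all `v ∈ D(A^θ)`, under the listed conditions on `(γ, θ)`. -/
theorem ks_nonlinearity_growth (L a γ θ : ℝ) (hL : 0 < L) (ha : 0 < a)
    (hcond : (1 / 4 < γ ∧ γ < 3 / 4 ∧ 3 / 8 - γ / 2 ≤ θ ∧ θ < 3 / 4 - γ) ∨
             (0 ≤ γ ∧ γ ≤ 1 / 4 ∧ 5 / 8 - γ ≤ θ ∧ θ < 3 / 4 - γ) ∨
             (γ < 0 ∧ 1 / 2 - γ ≤ θ ∧ θ < 3 / 4 - γ)) :
    ∃ c : ℝ, ∀ v : ℤ → ℂ, v 0 = 0 →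
      Summable (fun n : ℤ => ksEigen L n ^ (2 * θ) * ‖v n‖ ^ 2) →
      Summable (fun n : ℤ => ksEigen L n ^ (-(2 * γ)) * ‖ksB L v n - a * v n‖ ^ 2) ∧
      Real.sqrt (∑' n : ℤ, ksEigen L n ^ (-(2 * γ)) * ‖ksB L v n - a * v n‖ ^ 2) ≤
        c * (1 + ∑' n : ℤ, ksEigen L n ^ (2 * θ) * ‖v n‖ ^ 2) := by
  rcases hcond with ⟨_, _, _, _⟩ | ⟨_, _, _, _⟩ | ⟨_, _, _⟩ <;>
    exact ks_nonlinearity_growth_general L hL.ne' a γ θ (by linarith) (by linarith) (by linarith)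
      fun h => by linarith [h.1, h.2]
end

section
/- Let d ∈ {2,3} and θ ≥ 1. There is a constant C (depending on d and θ) such that for all a, b : ℤ^d → ℂ^d with a_0 = b_0 = 0, ∑_{k} |k|^{4θ} |a_k|² < ∞ and ∑_{k} |k|^{4θ} |b_k|² < ∞, the vectors c_n = ∑_{k∈ℤ^d} (a_k · (n−k)) b_{n−k} ∈ ℂ^d (the inner sums converging absolutely) satisfy ∑_{n≠0} |n|^{2(2θ−1)} |c_n|² ≤ C (∑_{k≠0} |k|^{4θ} |a_k|²) (∑_{k≠0} |k|^{4θ} |b_k|²). -/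
/-- Euclidean norm of a lattice point `k ∈ ℤ^d`. -/
noncomputable def latticeNorm {d : ℕ} (k : Fin d → ℤ) : ℝ :=
  Real.sqrt (∑ i, ((k i : ℝ)) ^ 2)

/-- `n`-th Fourier coefficient of the Navier–Stokes nonlinearity `(u·∇)v` (up to the
factor `i`), for vector fields on the `d`-torus with Fourier coefficients `a, b`. -/
noncomputable def nsB {d : ℕ} (a b : (Fin d → ℤ) → EuclideanSpace ℂ (Fin d))
    (n : Fin d → ℤ) : EuclideanSpace ℂ (Fin d) :=
  ∑' k : Fin d → ℤ, (∑ i, a k i * (((n - k) i : ℤ) : ℂ)) • b (n - k)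

/-!
Put `s = 4θ`. Since `|n| ≤ |k| + |n - k| ≤ 2 max(|k|, |n - k|)`, the weight
`|n| ^ (s - 2) * |n - k| ^ 2` is at most `2 ^ (s - 2) * (|k| ^ s + |n - k| ^ s)`, and
`|k| ^ s + |n - k| ^ s = (|k| ^ (-s) + |n - k| ^ (-s)) * (|k| ^ s * |n - k| ^ s)`. Because `s > d`
the factor `|k| ^ (-s) + |n - k| ^ (-s)` is summable over `k`, with a sum independent of `n`.
Cauchy–Schwarz in `k` therefore bounds `|n| ^ (s - 2) * |c_n| ^ 2` by a constant times the
convolution at `n` of the sequences `|k| ^ s * |a_k| ^ 2` and `|k| ^ s * |b_k| ^ 2`, and the sum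
over `n` of a convolution is the product of the two sums.
-/

section Series

theorem sq_tsum_le_tsum_mul_tsum_of_sq_le_mul {ι : Type*} {r f g : ι → ℝ} (hr : Summable r)
    (hf : Summable f) (hg : Summable g) (hf₀ : ∀ i, 0 ≤ f i) (hg₀ : ∀ i, 0 ≤ g i)
    (h : ∀ i, r i ^ 2 ≤ f i * g i) : (∑' i, r i) ^ 2 ≤ (∑' i, f i) * ∑' i, g i :=
  le_of_tendsto_of_tendsto' (hr.hasSum.pow 2) (Filter.Tendsto.mul hf.hasSum hg.hasSum) fun t =>
    Finset.sum_sq_le_sum_mul_sum_of_sq_le_mul t (fun i _ => hf₀ i) (fun i _ => hg₀ i)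
      fun i _ => h i

variable {G R : Type*} [AddGroup G] [NormedRing R] [CompleteSpace R] {f g : G → R}

theorem hasSum_mul_sub_of_summable_norm (hf : Summable fun k => ‖f k‖)
    (hg : Summable fun k => ‖g k‖) :
    HasSum (fun p : G × G => f p.2 * g (p.1 - p.2)) ((∑' k, f k) * ∑' k, g k) := by
  let shear : G × G ≃ G × G :=
    (Equiv.prodComm G G).trans (Equiv.prodShear (Equiv.refl G) Equiv.subRight)
  have h_mul : HasSum (fun p : G × G => f p.1 * g p.2) ((∑' k, f k) * ∑' k, g k) :=
    hf.of_norm.hasSum.mul hg.of_norm.hasSum (summable_mul_of_summable_norm hf hg)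
  exact shear.hasSum_iff.mpr h_mul

theorem summable_convolution_of_summable_norm (hf : Summable fun k => ‖f k‖)
    (hg : Summable fun k => ‖g k‖) (n : G) : Summable fun k => f k * g (n - k) :=
  (hasSum_mul_sub_of_summable_norm hf hg).summable.prod_factor n

theorem hasSum_convolution_of_summable_norm (hf : Summable fun k => ‖f k‖)
    (hg : Summable fun k => ‖g k‖) :
    HasSum (fun n => ∑' k, f k * g (n - k)) ((∑' k, f k) * ∑' k, g k) :=
  (hasSum_mul_sub_of_summable_norm hf hg).prod_fiberwise fun n =>
    (summable_convolution_of_summable_norm hf hg n).hasSum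

end Series

theorem rpow_sub_two_mul_sq_le {x y z s : ℝ} (hx : 0 ≤ x) (hy : 0 ≤ y) (hz : 0 ≤ z)
    (hzxy : z ≤ x + y) (hs : 2 ≤ s) :
    z ^ (s - 2) * y ^ 2 ≤ 2 ^ (s - 2) * (x ^ s + y ^ s) := by
  have hs₂ : 0 ≤ s - 2 := sub_nonneg.mpr hs
  have h_max : 0 ≤ max x y := hx.trans (le_max_left x y)
  have hz_le : z ≤ 2 * max x y := by linarith [le_max_left x y, le_max_right x y]
  have h_max_rpow : max x y ^ s ≤ x ^ s + y ^ s := by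
    rcases max_choice x y with h | h <;> rw [h]
    · exact le_add_of_nonneg_right (Real.rpow_nonneg hy s)
    · exact le_add_of_nonneg_left (Real.rpow_nonneg hx s)
  calc z ^ (s - 2) * y ^ 2 ≤ (2 * max x y) ^ (s - 2) * max x y ^ 2 := by
        gcongr
        exact le_max_right x y
    _ = 2 ^ (s - 2) * max x y ^ s := by
        rw [Real.mul_rpow zero_le_two h_max, mul_assoc, ← Real.rpow_natCast (max x y) 2,
          ← Real.rpow_add_of_nonneg h_max hs₂ (Nat.cast_nonneg 2), Nat.cast_ofNat,
          sub_add_cancel]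
    _ ≤ 2 ^ (s - 2) * (x ^ s + y ^ s) := by gcongr

theorem rpow_add_rpow_eq_rpow_neg_add_rpow_neg_mul {x y : ℝ} (hx : 0 < x) (hy : 0 < y) (s : ℝ) :
    x ^ s + y ^ s = (x ^ (-s) + y ^ (-s)) * (x ^ s * y ^ s) := by
  rw [Real.rpow_neg hx.le, Real.rpow_neg hy.le]
  field_simp
  ring

section LatticeNorm

variable {d : ℕ}

theorem latticeNorm_eq_norm (k : Fin d → ℤ) :
    latticeNorm k = ‖(WithLp.toLp 2 fun i => (k i : ℝ) : EuclideanSpace ℝ (Fin d))‖ := by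
  simp [latticeNorm, EuclideanSpace.norm_eq]

theorem latticeNorm_nonneg (k : Fin d → ℤ) : 0 ≤ latticeNorm k :=
  Real.sqrt_nonneg _

theorem latticeNorm_rpow_nonneg (k : Fin d → ℤ) (r : ℝ) : 0 ≤ latticeNorm k ^ r :=
  Real.rpow_nonneg (latticeNorm_nonneg k) r

theorem latticeNorm_add_le (k m : Fin d → ℤ) :
    latticeNorm (k + m) ≤ latticeNorm k + latticeNorm m := by
  simp only [latticeNorm_eq_norm]
  refine le_of_eq_of_le (congrArg norm ?_) (norm_add_le _ _)
  ext i
  simp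

theorem one_le_latticeNorm {k : Fin d → ℤ} (hk : k ≠ 0) : 1 ≤ latticeNorm k := by
  obtain ⟨i, hi⟩ := Function.ne_iff.mp hk
  have h_one : (1 : ℝ) ≤ (k i : ℝ) ^ 2 := by
    exact_mod_cast (sq_pos_of_ne_zero hi : 0 < k i ^ 2)
  exact Real.one_le_sqrt.mpr (h_one.trans
    (Finset.single_le_sum (f := fun j => (k j : ℝ) ^ 2) (fun j _ => sq_nonneg _)
      (Finset.mem_univ i)))

theorem summable_latticeNorm_rpow {r : ℝ} (hr : r < -d) :
    Summable fun k : Fin d → ℤ => latticeNorm k ^ r := by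
  let B := (EuclideanSpace.basisFun (Fin d) ℝ).toBasis
  let coords := (B.restrictScalars ℤ).equivFun
  have h_rank : Module.finrank ℤ (Submodule.span ℤ (Set.range B)) = d := by
    rw [Module.finrank_eq_card_basis (B.restrictScalars ℤ), Fintype.card_fin]
  have h_norm (k : Fin d → ℤ) : ‖coords.symm k‖ = latticeNorm k := by
    rw [latticeNorm_eq_norm, Submodule.coe_norm, Module.Basis.equivFun_symm_apply,
      Submodule.coe_sum]
    simp_rw [Submodule.coe_smul, Module.Basis.restrictScalars_apply]
    congr 1
    ext j
    simp [B, Pi.single_apply]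
  simpa only [Function.comp_def, h_norm] using
    (ZLattice.summable_norm_rpow _ r (by rwa [h_rank])).comp_injective coords.symm.injective

theorem norm_sum_mul_intCast_le (x : EuclideanSpace ℂ (Fin d)) (m : Fin d → ℤ) :
    ‖∑ i, x i * (m i : ℂ)‖ ≤ ‖x‖ * latticeNorm m := by
  calc ‖∑ i, x i * (m i : ℂ)‖ ≤ ∑ i, ‖x i‖ * |(m i : ℝ)| := by
        refine (norm_sum_le _ _).trans_eq (Finset.sum_congr rfl fun i _ => ?_)
        rw [norm_mul, Complex.norm_intCast]
    _ ≤ √(∑ i, ‖x i‖ ^ 2) * √(∑ i, |(m i : ℝ)| ^ 2) := Real.sum_mul_le_sqrt_mul_sqrt _ _ _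
    _ = ‖x‖ * latticeNorm m := by simp only [EuclideanSpace.norm_eq, latticeNorm, sq_abs]

end LatticeNorm

section Sobolev

variable {d : ℕ} {E : Type*} [SeminormedAddCommGroup E]

/-- The `k`-th term `|k| ^ s * |a_k| ^ 2` of the squared homogeneous Sobolev norm of order `s / 2`:
for a vector field `u` with Fourier coefficients `a`, these terms sum to `|A^{s/4} u|²`.
The mode `k = 0` has weight `0 ^ s`, which is `1` for `s = 0` and `0` otherwise. -/
noncomputable def sobolevTerm (s : ℝ) (a : (Fin d → ℤ) → E) (k : Fin d → ℤ) : ℝ :=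
  latticeNorm k ^ s * ‖a k‖ ^ 2

theorem sobolevTerm_nonneg (s : ℝ) (a : (Fin d → ℤ) → E) (k : Fin d → ℤ) :
    0 ≤ sobolevTerm s a k :=
  mul_nonneg (latticeNorm_rpow_nonneg k s) (sq_nonneg _)

theorem summable_sobolevTerm_of_le {s t : ℝ} (hst : s ≤ t) {a : (Fin d → ℤ) → E}
    (ha : Summable (sobolevTerm t a)) : Summable (sobolevTerm s a) := by
  refine ha.of_norm_bounded_eventually ?_
  filter_upwards [(Set.finite_singleton 0).compl_mem_cofinite] with k hk
  rw [Real.norm_of_nonneg (sobolevTerm_nonneg s a k)]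
  exact mul_le_mul_of_nonneg_right
    (Real.rpow_le_rpow_of_exponent_le (one_le_latticeNorm hk) hst) (sq_nonneg _)

end Sobolev

section Nonlinearity

variable {d : ℕ} {a b : (Fin d → ℤ) → EuclideanSpace ℂ (Fin d)} {s : ℝ}

/-- The contribution `(a_k · (n - k)) b_{n-k}` of the pair of modes `k`, `n - k` to the `n`-th
Fourier coefficient `nsB a b n` of the nonlinearity. -/
noncomputable def nsBTerm (a b : (Fin d → ℤ) → EuclideanSpace ℂ (Fin d)) (n k : Fin d → ℤ) :
    EuclideanSpace ℂ (Fin d) :=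
  (∑ i, a k i * (((n - k) i : ℤ) : ℂ)) • b (n - k)

theorem norm_nsBTerm_le (a b : (Fin d → ℤ) → EuclideanSpace ℂ (Fin d)) (n k : Fin d → ℤ) :
    ‖nsBTerm a b n k‖ ≤ ‖a k‖ * (latticeNorm (n - k) * ‖b (n - k)‖) := by
  rw [nsBTerm, norm_smul, ← mul_assoc]
  exact mul_le_mul_of_nonneg_right (norm_sum_mul_intCast_le (a k) (n - k)) (norm_nonneg _)

theorem summable_norm_nsBTerm (ha : Summable (sobolevTerm 0 a)) (hb : Summable (sobolevTerm 2 b))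
    (n : Fin d → ℤ) : Summable fun k => ‖nsBTerm a b n k‖ := by
  refine .of_nonneg_of_le (fun _ => norm_nonneg _) (fun k => ?_)
    (ha.add ((Equiv.subLeft n).summable_iff.mpr hb))
  have h_amgm := two_mul_le_add_sq ‖a k‖ (latticeNorm (n - k) * ‖b (n - k)‖)
  have h_nonneg := (norm_nonneg _).trans (norm_nsBTerm_le a b n k)
  simp only [sobolevTerm, Function.comp_apply, Equiv.subLeft_apply, Real.rpow_zero, one_mul,
    Real.rpow_two, ← mul_pow]
  linarith [norm_nsBTerm_le a b n k]

theorem rpow_mul_norm_nsBTerm_sq_le (hs : 2 ≤ s) (ha : a 0 = 0) (n k : Fin d → ℤ) :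
    latticeNorm n ^ (s - 2) * ‖nsBTerm a b n k‖ ^ 2 ≤
      2 ^ (s - 2) * (latticeNorm k ^ (-s) + latticeNorm (n - k) ^ (-s)) *
        (sobolevTerm s a k * sobolevTerm s b (n - k)) := by
  rcases eq_or_ne (nsBTerm a b n k) 0 with h_zero | h_ne
  · rw [h_zero, norm_zero, zero_pow two_ne_zero, mul_zero]
    exact mul_nonneg
      (mul_nonneg (by positivity)
        (add_nonneg (latticeNorm_rpow_nonneg k _) (latticeNorm_rpow_nonneg _ _)))
      (mul_nonneg (sobolevTerm_nonneg s a k) (sobolevTerm_nonneg s b _))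
  have hk : 0 < latticeNorm k :=
    one_pos.trans_le (one_le_latticeNorm fun h => h_ne (by simp [nsBTerm, h, ha]))
  have hnk : 0 < latticeNorm (n - k) :=
    one_pos.trans_le (one_le_latticeNorm fun h => h_ne (by rw [nsBTerm, h]; simp))
  have h_weight : latticeNorm n ^ (s - 2) * latticeNorm (n - k) ^ 2 ≤
      2 ^ (s - 2) * (latticeNorm k ^ s + latticeNorm (n - k) ^ s) :=
    rpow_sub_two_mul_sq_le hk.le hnk.le (latticeNorm_nonneg n)
      (by simpa only [add_sub_cancel] using latticeNorm_add_le k (n - k)) hs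
  calc latticeNorm n ^ (s - 2) * ‖nsBTerm a b n k‖ ^ 2
      ≤ latticeNorm n ^ (s - 2) * (‖a k‖ * (latticeNorm (n - k) * ‖b (n - k)‖)) ^ 2 :=
        mul_le_mul_of_nonneg_left
          (pow_le_pow_left₀ (norm_nonneg _) (norm_nsBTerm_le a b n k) 2)
          (latticeNorm_rpow_nonneg n _)
    _ = latticeNorm n ^ (s - 2) * latticeNorm (n - k) ^ 2 * (‖a k‖ ^ 2 * ‖b (n - k)‖ ^ 2) := by
        ring
    _ ≤ 2 ^ (s - 2) * (latticeNorm k ^ s + latticeNorm (n - k) ^ s) *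
          (‖a k‖ ^ 2 * ‖b (n - k)‖ ^ 2) :=
        mul_le_mul_of_nonneg_right h_weight (by positivity)
    _ = _ := by
        rw [rpow_add_rpow_eq_rpow_neg_add_rpow_neg_mul hk hnk, sobolevTerm, sobolevTerm]
        ring

theorem rpow_mul_norm_nsB_sq_le (hs : 2 ≤ s) (hd : d < s) (ha₀ : a 0 = 0)
    (ha : Summable (sobolevTerm s a)) (hb : Summable (sobolevTerm s b)) (n : Fin d → ℤ) :
    latticeNorm n ^ (s - 2) * ‖nsB a b n‖ ^ 2 ≤
      2 ^ (s - 2) * (2 * ∑' k : Fin d → ℤ, latticeNorm k ^ (-s)) *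
        ∑' k, sobolevTerm s a k * sobolevTerm s b (n - k) := by
  have h_term : Summable fun k => ‖nsBTerm a b n k‖ :=
    summable_norm_nsBTerm (summable_sobolevTerm_of_le (zero_le_two.trans hs) ha)
      (summable_sobolevTerm_of_le hs hb) n
  have h_inv : HasSum (fun k : Fin d → ℤ => latticeNorm k ^ (-s)) (∑' k, latticeNorm k ^ (-s)) :=
    (summable_latticeNorm_rpow (neg_lt_neg hd)).hasSum
  have h_weight := (h_inv.add ((Equiv.subLeft n).hasSum_iff.mpr h_inv)).mul_left (2 ^ (s - 2))
  have h_sqrt : √(latticeNorm n ^ (s - 2)) ^ 2 = latticeNorm n ^ (s - 2) :=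
    Real.sq_sqrt (latticeNorm_rpow_nonneg n _)
  calc latticeNorm n ^ (s - 2) * ‖nsB a b n‖ ^ 2
      ≤ latticeNorm n ^ (s - 2) * (∑' k, ‖nsBTerm a b n k‖) ^ 2 :=
        mul_le_mul_of_nonneg_left
          (pow_le_pow_left₀ (norm_nonneg _) (norm_tsum_le_tsum_norm h_term) 2)
          (latticeNorm_rpow_nonneg n _)
    _ = (∑' k, √(latticeNorm n ^ (s - 2)) * ‖nsBTerm a b n k‖) ^ 2 := by
        rw [tsum_mul_left, mul_pow, h_sqrt]
    _ ≤ _ := sq_tsum_le_tsum_mul_tsum_of_sq_le_mul (h_term.mul_left _) h_weight.summable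
        (summable_convolution_of_summable_norm ha.norm hb.norm n)
        (fun k => mul_nonneg (by positivity)
          (add_nonneg (latticeNorm_rpow_nonneg k _) (latticeNorm_rpow_nonneg _ _)))
        (fun k => mul_nonneg (sobolevTerm_nonneg s a k) (sobolevTerm_nonneg s b _))
        fun k => by rw [mul_pow, h_sqrt]; exact rpow_mul_norm_nsBTerm_sq_le hs ha₀ n k
    _ = _ := by rw [h_weight.tsum_eq, two_mul]

end Nonlinearity

theorem nsB_estimate_general (d : ℕ) (θ : ℝ) (hθ : 1 / 2 ≤ θ) (hd : d < 4 * θ) :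
    ∃ C : ℝ, ∀ a b : (Fin d → ℤ) → EuclideanSpace ℂ (Fin d),
      a 0 = 0 →
      Summable (fun k : Fin d → ℤ => latticeNorm k ^ (4 * θ) * ‖a k‖ ^ 2) →
      Summable (fun k : Fin d → ℤ => latticeNorm k ^ (4 * θ) * ‖b k‖ ^ 2) →
      (∀ n : Fin d → ℤ, Summable (fun k : Fin d → ℤ =>
        ‖(∑ i, a k i * (((n - k) i : ℤ) : ℂ)) • b (n - k)‖)) ∧
      Summable (fun n : Fin d → ℤ =>
        latticeNorm n ^ (2 * (2 * θ - 1)) * ‖nsB a b n‖ ^ 2) ∧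
      ∑' n : Fin d → ℤ, latticeNorm n ^ (2 * (2 * θ - 1)) * ‖nsB a b n‖ ^ 2 ≤
        C * (∑' k : Fin d → ℤ, latticeNorm k ^ (4 * θ) * ‖a k‖ ^ 2) *
          (∑' k : Fin d → ℤ, latticeNorm k ^ (4 * θ) * ‖b k‖ ^ 2) := by
  have hs : 2 ≤ 4 * θ := by linarith
  rw [show 2 * (2 * θ - 1) = 4 * θ - 2 by ring]
  refine ⟨2 ^ (4 * θ - 2) * (2 * ∑' k : Fin d → ℤ, latticeNorm k ^ (-(4 * θ))),
    fun a b ha₀ ha hb => ?_⟩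
  have h_conv := hasSum_convolution_of_summable_norm ha.norm hb.norm
  have h_bound := rpow_mul_norm_nsB_sq_le hs hd ha₀ ha hb
  have h_sum : Summable (sobolevTerm (4 * θ - 2) (nsB a b)) :=
    (h_conv.summable.mul_left _).of_nonneg_of_le (sobolevTerm_nonneg _ _) h_bound
  refine ⟨summable_norm_nsBTerm (summable_sobolevTerm_of_le (zero_le_two.trans hs) ha)
    (summable_sobolevTerm_of_le hs hb), h_sum, ?_⟩
  rw [mul_assoc _ (∑' k, _), ← h_conv.tsum_eq, ← tsum_mul_left]
  exact h_sum.tsum_le_tsum h_bound (h_conv.summable.mul_left _)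

/-- The estimate `|A^{θ-1/2} B(u,v)| ≤ C |A^θ u| |A^θ v|` for the Navier–Stokes
nonlinearity on the `d`-torus (`d = 2, 3`, `θ ≥ 1`), in Fourier form. -/
theorem nsB_estimate (d : ℕ) (hd : d = 2 ∨ d = 3) (θ : ℝ) (hθ : 1 ≤ θ) :
    ∃ C : ℝ, ∀ a b : (Fin d → ℤ) → EuclideanSpace ℂ (Fin d),
      a 0 = 0 → b 0 = 0 →
      Summable (fun k : Fin d → ℤ => latticeNorm k ^ (4 * θ) * ‖a k‖ ^ 2) →
      Summable (fun k : Fin d → ℤ => latticeNorm k ^ (4 * θ) * ‖b k‖ ^ 2) →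
      (∀ n : Fin d → ℤ, Summable (fun k : Fin d → ℤ =>
        ‖(∑ i, a k i * (((n - k) i : ℤ) : ℂ)) • b (n - k)‖)) ∧
      Summable (fun n : Fin d → ℤ =>
        latticeNorm n ^ (2 * (2 * θ - 1)) * ‖nsB a b n‖ ^ 2) ∧
      ∑' n : Fin d → ℤ, latticeNorm n ^ (2 * (2 * θ - 1)) * ‖nsB a b n‖ ^ 2 ≤
        C * (∑' k : Fin d → ℤ, latticeNorm k ^ (4 * θ) * ‖a k‖ ^ 2) *
          (∑' k : Fin d → ℤ, latticeNorm k ^ (4 * θ) * ‖b k‖ ^ 2) := by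
  have hd_lt : (d : ℝ) < 4 * θ := by rcases hd with rfl | rfl <;> norm_num <;> linarith
  obtain ⟨C, hC⟩ := nsB_estimate_general d θ (by linarith) hd_lt
  exact ⟨C, fun a b ha _ => hC a b ha⟩
end
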